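/- For q = 2^s with s ≥ 1 and all β, γ ∈ F_q, the matrix identity U_β^{(3)} · X^γ · U_β^{(3)} = ε(tr(βγ^3)) · X^γ · Z^{(βγ)^{2^{s−1}} + βγ^2} holds in the q×q complex matrices (note that x ↦ x^{2^{s−1}} is the unique square-root map in F_q). -/

import Mathlib

/-!
The matrix `X^γ` permutes coordinates, so moving a diagonal matrix past it translates the entries
by `γ`, and the identity reduces to one between phases at each `η`. In characteristic two,
`β(η + γ)³ + βη³ = βγ³ + βγη² + βγ²η`. The trace is invariant under squaring, so the quadratic term
`βγη² = (√(βγ) η)²` has the same phase as the linear term `√(βγ) η`.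
-/

noncomputable section

/-- The trace map `tr : F_{2^s} → F_2 ⊆ F_{2^s}`, `tr γ = Σ_{i=0}^{s-1} γ^{2^i}`
(its values lie in the prime field `{0, 1}`). -/
def trF {F : Type} [Field F] (s : ℕ) (x : F) : F := ∑ i ∈ Finset.range s, x ^ 2 ^ i

/-- `ε ∘ tr : F_{2^s} → ℂ`, where `ε 0 = 1` and `ε 1 = -1` on the prime field `F_2`. -/
def epsTr {F : Type} [Field F] [DecidableEq F] (s : ℕ) (x : F) : ℂ := if trF s x = 0 then 1 else -1

/-- The Pauli `X^β`: `(X^β)_{η,η'} = 1` if `η = η' + β`, else `0`. -/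
def Xm {F : Type} [Field F] [Fintype F] [DecidableEq F] (β : F) : Matrix F F ℂ :=
  Matrix.of fun η η' => if η = η' + β then 1 else 0

/-- The Pauli `Z^γ`: diagonal with entry `ε(tr(γη))` at `η`. -/
def Zm {F : Type} [Field F] [Fintype F] [DecidableEq F] (s : ℕ) (γ : F) : Matrix F F ℂ :=
  Matrix.diagonal fun η => epsTr s (γ * η)

/-- The diagonal gate `U_β^{(n)}` with diagonal entry `ε(tr(β η^n))` at `η`. -/
def Um {F : Type} [Field F] [Fintype F] [DecidableEq F] (s : ℕ) (n : ℕ) (β : F) :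
    Matrix F F ℂ :=
  Matrix.diagonal fun η => epsTr s (β * η ^ n)

section Trace

variable {F : Type} [Field F] {s : ℕ} {x y : F}

lemma trF_add [CharP F 2] (s : ℕ) (x y : F) : trF s (x + y) = trF s x + trF s y := by
  simp only [trF, add_pow_char_pow, Finset.sum_add_distrib]

lemma sq_trF [CharP F 2] (s : ℕ) (x : F) : trF s x ^ 2 = trF s (x ^ 2) := by
  simp only [trF, CharTwo.sum_sq, pow_right_comm x]

-- Squaring shifts the exponents in the trace cyclically, since `x ^ 2 ^ s = x`.
lemma trF_sq (hx : x ^ 2 ^ s = x) : trF s (x ^ 2) = trF s x := by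
  have hshift : trF s (x ^ 2) + x = trF s x + x := calc
    trF s (x ^ 2) + x = ∑ i ∈ Finset.range (s + 1), x ^ 2 ^ i := by
      rw [Finset.sum_range_succ', pow_zero, pow_one]
      simp only [trF, ← pow_mul, ← pow_succ']
    _ = trF s x + x := by rw [Finset.sum_range_succ, hx, trF]
  exact add_right_cancel hshift

lemma trF_eq_zero_or_one [CharP F 2] (hx : x ^ 2 ^ s = x) : trF s x = 0 ∨ trF s x = 1 := by
  rw [← IsIdempotentElem.iff_eq_zero_or_one, IsIdempotentElem, ← pow_two, sq_trF, trF_sq hx]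

variable [DecidableEq F]

lemma epsTr_add [CharP F 2] (hx : x ^ 2 ^ s = x) (hy : y ^ 2 ^ s = y) :
    epsTr s (x + y) = epsTr s x * epsTr s y := by
  rcases trF_eq_zero_or_one hx with hx | hx <;> rcases trF_eq_zero_or_one hy with hy | hy <;>
    simp [epsTr, trF_add, hx, hy, CharTwo.add_self_eq_zero]

lemma epsTr_sq (hx : x ^ 2 ^ s = x) : epsTr s (x ^ 2) = epsTr s x := by
  rw [epsTr, epsTr, trF_sq hx]

end Trace

lemma diagonal_mul_Xm {F : Type} [Field F] [Fintype F] [DecidableEq F] (d : F → ℂ) (γ : F) :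
    Matrix.diagonal d * Xm γ = Xm γ * Matrix.diagonal fun η => d (η + γ) := by
  ext η η'
  rw [Matrix.diagonal_mul, Matrix.mul_diagonal, Xm, Matrix.of_apply]
  split_ifs with h
  · rw [h, mul_comm]
  · rw [mul_zero, zero_mul]

lemma Um_mul_Xm_mul_Um {F : Type} [Field F] [Fintype F] [DecidableEq F] (s n : ℕ) (β γ : F) :
    Um s n β * Xm γ * Um s n β =
      Xm γ * Matrix.diagonal fun η => epsTr s (β * (η + γ) ^ n) * epsTr s (β * η ^ n) := by
  rw [Um, diagonal_mul_Xm, mul_assoc, Matrix.diagonal_mul_diagonal]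

lemma add_pow_three_add_pow_three {R : Type*} [CommRing R] [CharP R 2] (x y : R) :
    (x + y) ^ 3 + x ^ 3 = y ^ 3 + (y * x ^ 2 + y ^ 2 * x) := by
  linear_combination (x ^ 3 + x ^ 2 * y + x * y ^ 2) * CharTwo.two_eq_zero (R := R)

lemma epsTr_cubic_add_mul_epsTr_cubic {F : Type} [Field F] [DecidableEq F] [CharP F 2] {s : ℕ}
    (hfix : ∀ x : F, x ^ 2 ^ s = x) {β γ r : F} (hr : r ^ 2 = β * γ) (η : F) :
    epsTr s (β * (η + γ) ^ 3) * epsTr s (β * η ^ 3) =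
      epsTr s (β * γ ^ 3) * epsTr s ((r + β * γ ^ 2) * η) := by
  have hadd (x y : F) : epsTr s (x + y) = epsTr s x * epsTr s y := epsTr_add (hfix x) (hfix y)
  have hquadratic : epsTr s (β * γ * η ^ 2) = epsTr s (r * η) := by
    rw [← hr, ← mul_pow, epsTr_sq (hfix _)]
  have hcubic : β * (η + γ) ^ 3 + β * η ^ 3 =
      β * γ ^ 3 + (β * γ * η ^ 2 + β * γ ^ 2 * η) := by
    rw [← mul_add, add_pow_three_add_pow_three]
    ring
  calc epsTr s (β * (η + γ) ^ 3) * epsTr s (β * η ^ 3)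
      = epsTr s (β * γ ^ 3 + (β * γ * η ^ 2 + β * γ ^ 2 * η)) := by
        rw [← hadd, hcubic]
    _ = epsTr s (β * γ ^ 3) * (epsTr s (r * η) * epsTr s (β * γ ^ 2 * η)) := by
        rw [hadd, hadd, hquadratic]
    _ = epsTr s (β * γ ^ 3) * epsTr s ((r + β * γ ^ 2) * η) := by
        rw [← hadd, ← add_mul]

/-- For `q = 2^s`, `s ≥ 1`: `U_β^{(3)} X^γ U_β^{(3)} = ε(tr(βγ^3)) X^γ Z^{(βγ)^{2^{s-1}} + βγ^2}`
(here `x ↦ x^{2^{s−1}}` is the unique square-root map in `F_q`). -/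
theorem U3_conjugation_identity
    {s : ℕ} (hs : 1 ≤ s) {F : Type} [Field F] [Fintype F] [DecidableEq F]
    (hF : Fintype.card F = 2 ^ s) (β γ : F) :
    Um s 3 β * Xm γ * Um s 3 β =
      epsTr s (β * γ ^ 3) • (Xm γ * Zm s ((β * γ) ^ 2 ^ (s - 1) + β * γ ^ 2)) := by
  have : CharP F 2 := charP_of_card_eq_prime_pow hF
  have hfix (x : F) : x ^ 2 ^ s = x := hF ▸ FiniteField.pow_card x
  have hsqrt : ((β * γ) ^ 2 ^ (s - 1)) ^ 2 = β * γ := by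
    rw [← pow_mul, ← pow_succ, Nat.sub_add_cancel hs, hfix]
  rw [Um_mul_Xm_mul_Um, Zm, ← Matrix.mul_smul, ← Matrix.diagonal_smul]
  congr 2 with η
  exact epsTr_cubic_add_mul_epsTr_cubic hfix hsqrt η
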